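/- arXiv:math/9201214 — 2 statements merged into one kernel-verified Lean document; each statement's English description precedes it below -/
import Mathlib

section
/- Let (z_j) be a normalized block basis of the natural basis of X_p, let (E_j) be pairwise disjoint subsets of ℕ with E_j contained in the support of z_j, and let c, δ > 0 satisfy, for all j: (a) |z_{j|E_j}|_2 ≥ δ·|z_j|_2 and (b) c·|z_{j|E_j}|_2 ≥ ω(E_j)^{(p-2)/(2p)}. Then the closed linear span [z_j] is complemented in X_p by a projection of norm at most max{δ^{-1}, c}, and [z_j] is isomorphic to X_{p,w'}, where w'_j = ω(E_j)^{(p-2)/(2p)}. -/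
open scoped ENNReal

noncomputable section

/-- The sequence space `ℓ_p` (of real sequences), for a real exponent `p`. -/
abbrev SeqP (p : ℝ) := lp (fun _ : ℕ => ℝ) (ENNReal.ofReal p)

/-- The sequence space `ℓ_2` (of real sequences). -/
abbrev Seq2 := lp (fun _ : ℕ => ℝ) 2

/-- The space `X_{p,w}`, realized as the submodule of `ℓ_p ⊕_∞ ℓ_2` consisting of the
pairs `(x, y)` with `y n = w n * x n`.  Since the norm on the product is the maximum of
the two norms, this is exactly the completion of the finitely supported sequences under
`‖a‖ = max {|a|_p, |a|_{2,w}}`, the element with coordinates `a` being identified with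
the pair `(a, w·a)`. -/
def XpwMod (p : ℝ) (w : ℕ → ℝ) : Submodule ℝ (SeqP p × Seq2) where
  carrier := {z | ∀ n, (z.2 : ℕ → ℝ) n = w n * (z.1 : ℕ → ℝ) n}
  add_mem' := by
    intro a b ha hb n
    simp only [Prod.fst_add, Prod.snd_add, lp.coeFn_add, Pi.add_apply, ha n, hb n]
    ring
  zero_mem' := by
    intro n
    simp
  smul_mem' := by
    intro c a ha n
    simp only [Prod.smul_fst, Prod.smul_snd, lp.coeFn_smul, Pi.smul_apply, ha n,
      smul_eq_mul]
    ring

/-- The space `X_{p,w}` with its natural norm `‖a‖ = max {|a|_p, |a|_{2,w}}`. -/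
def Xpw (p : ℝ) (w : ℕ → ℝ) : Type := ↥(XpwMod p w)

variable {p : ℝ} {w : ℕ → ℝ}

instance [Fact (1 ≤ ENNReal.ofReal p)] : NormedAddCommGroup (Xpw p w) :=
  inferInstanceAs (NormedAddCommGroup ↥(XpwMod p w))

instance [Fact (1 ≤ ENNReal.ofReal p)] : NormedSpace ℝ (Xpw p w) :=
  inferInstanceAs (NormedSpace ℝ ↥(XpwMod p w))

/-- The pair of coordinates (in `ℓ_p` and in weighted `ℓ_2`) of an element of `X_{p,w}`. -/
def Xpw.pair (x : Xpw p w) : SeqP p × Seq2 := (show ↥(XpwMod p w) from x).val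

/-- The underlying sequence of coordinates of an element of `X_{p,w}`. -/
def seq (x : Xpw p w) : ℕ → ℝ := (Xpw.pair x).1

/-- `|x|_p` for `x ∈ X_{p,w}`. -/
def nrmP (x : Xpw p w) : ℝ := ‖(Xpw.pair x).1‖

/-- `|x|_2 = |x|_{2,w}` for `x ∈ X_{p,w}`. -/
def nrm2 (x : Xpw p w) : ℝ := ‖(Xpw.pair x).2‖

/-- The ratio `r(x) = |x|_2 / |x|_p`. -/
def ratio (x : Xpw p w) : ℝ := nrm2 x / nrmP x

/-- `ω(E) = ∑_{n ∈ E} w_n^{2p/(p-2)}`. -/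
def omegaE (p : ℝ) (w : ℕ → ℝ) (E : Set ℕ) : ℝ :=
  ∑' n : E, w (n : ℕ) ^ (2 * p / (p - 2))

/-- The pairing `⟨x, y⟩ = ∑_n x_n y_n w_n²`. -/
def pairW (w : ℕ → ℝ) (x y : Xpw p w) : ℝ :=
  ∑' n, seq x n * seq y n * w n ^ 2

/-- `w` is a weight sequence suitable for Rosenthal's space `X_p`: it is positive and for
every `ε > 0`, `∑_{w_n < ε} w_n^{2p/(p-2)} = ∞`. -/
def IsXpWeight (p : ℝ) (w : ℕ → ℝ) : Prop :=
  (∀ n, 0 < w n) ∧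
    ∀ ε : ℝ, 0 < ε →
      (∑' n : {n : ℕ | w n < ε}, ENNReal.ofReal (w (n : ℕ) ^ (2 * p / (p - 2)))) = ⊤

theorem memℓp_indicator {q : ℝ≥0∞} (E : Set ℕ) {f : ℕ → ℝ} (hf : Memℓp f q) :
    Memℓp (E.indicator f) q := by
  rcases ENNReal.trichotomy q with hq | hq | hq
  · subst hq
    refine memℓp_zero ((memℓp_zero_iff.mp hf).subset ?_)
    intro i hi
    simp only [Set.mem_setOf_eq] at hi ⊢
    intro h
    exact hi (by simp [Set.indicator_apply, h])
  · subst hq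
    obtain ⟨C, hC⟩ := (memℓp_infty_iff.mp hf)
    refine memℓp_infty ⟨C, ?_⟩
    rintro x ⟨i, rfl⟩
    exact le_trans (norm_indicator_le_norm_self f i) (hC ⟨i, rfl⟩)
  · refine memℓp_gen (Summable.of_nonneg_of_le (fun i => ?_) (fun i => ?_)
      (hf.summable hq))
    · positivity
    · exact Real.rpow_le_rpow (norm_nonneg _) (norm_indicator_le_norm_self f i) hq.le

/-- The restriction `x ↦ x_{|E}` of elements of `X_{p,w}` to a set `E` of coordinates. -/
def restrict (E : Set ℕ) (x : Xpw p w) : Xpw p w :=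
  show ↥(XpwMod p w) from
  ⟨(⟨E.indicator ((Xpw.pair x).1 : ℕ → ℝ), memℓp_indicator E (lp.memℓp (Xpw.pair x).1)⟩,
    ⟨E.indicator ((Xpw.pair x).2 : ℕ → ℝ), memℓp_indicator E (lp.memℓp (Xpw.pair x).2)⟩), by
    intro n
    by_cases hn : n ∈ E
    · have h : ((Xpw.pair x).2 : ℕ → ℝ) n = w n * ((Xpw.pair x).1 : ℕ → ℝ) n :=
        (show ↥(XpwMod p w) from x).2 n
      simpa [Set.indicator_of_mem hn] using h
    · simp [Set.indicator_of_notMem hn]⟩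

/-!
Let `b j = |z j|_{E j}|_2`.  The span of `(z j)` is complemented because the identity of
`X_{p,b}` factors through `X_{p,w}`: the synthesis operator `T` sends `e j` to `z j`, and the
analysis operator `A` sends `x` to the coefficients `⟨z j|_{E j}, x⟩ / b j ^ 2` of its orthogonal
projection onto the lines spanned by the `z j|_{E j}`.  As the `z j` have disjoint supports, `T`
has norm at most `1` for `|·|_p` and, by (a), at most `δ⁻¹` for `|·|_2`.  As the `E j` are
disjoint, `A` has norm at most `1` for `|·|_2` by Bessel's inequality; for `|·|_p` it has norm at
most `c`, since `|x|_{E j}|_2 ≤ w' j * |x|_{E j}|_p` by Hölder's inequality and `w' j ≤ c * b j`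
by (b).  Hence `T ∘ A` has norm at most `c` for `|·|_p` and at most `δ⁻¹` for `|·|_2`.  Finally
Hölder's inequality for `z j` gives `b j ≤ w' j ≤ c * b j`, so `X_{p,b}` and `X_{p,w'}` are
isomorphic.
-/

section DisjointSupports

open Function

variable {α ι M : Type*} [Zero M] {f : ι → α → M}

theorem subsingleton_support_of_pairwise_disjoint
    (hf : Pairwise (Disjoint on fun j => support (f j))) (n : α) :
    (support fun j => f j n).Subsingleton := fun j hj k hk => by
  by_contra hjk
  exact Set.disjoint_left.mp (hf hjk) hj hk

theorem pairwise_disjoint_support_of_block [LinearOrder ι] [Preorder α]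
    (hf : ∀ j k, j < k → ∀ m ∈ support (f j), ∀ n ∈ support (f k), m < n) :
    Pairwise (Disjoint on fun j => support (f j)) :=
  (pairwise_disjoint_on _).mpr fun j k hjk => Set.disjoint_left.mpr fun n hj hk =>
    (hf j k hjk n hj n hk).false

end DisjointSupports

section DisjointFamilies

open Function

variable {α ι F : Type*} [NormedAddCommGroup F] {r : ℝ≥0∞}

theorem exists_lp_eq_of_norm_le_mul (hr : r ≠ 0) {C : ℝ} (hC : 0 ≤ C) {f : α → F}
    (g : lp (fun _ : α => ℝ) r) (hf : ∀ i, ‖f i‖ ≤ C * ‖g i‖) :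
    ∃ f' : lp (fun _ : α => F) r, ⇑f' = f ∧ ‖f'‖ ≤ C * ‖g‖ := by
  have hfg (i : α) : ‖f i‖ ≤ ‖(C • g) i‖ := by
    simpa [abs_of_nonneg hC] using hf i
  refine ⟨⟨f, (lp.memℓp (C • g)).mono' hfg⟩, rfl, ?_⟩
  calc ‖(⟨f, _⟩ : lp (fun _ : α => F) r)‖ ≤ ‖C • g‖ := lp.norm_mono hr hfg
    _ = C * ‖g‖ := by rw [lp.norm_const_smul hr, Real.norm_of_nonneg hC]

theorem norm_tsum_rpow_of_subsingleton_support {f : ι → F} (hf : (support f).Subsingleton)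
    {q : ℝ} (hq : q ≠ 0) : ‖∑' j, f j‖ ^ q = ∑' j, ‖f j‖ ^ q := by
  obtain h | ⟨j, hj⟩ := hf.eq_empty_or_singleton
  · simp [support_eq_empty_iff.mp h, Real.zero_rpow hq]
  · have hzero (k : ι) (hk : k ≠ j) : f k = 0 := by
      simpa [hk] using congrArg (k ∈ ·) hj
    have hzero' (k : ι) (hk : k ≠ j) : ‖f k‖ ^ q = 0 := by
      rw [hzero k hk, norm_zero, Real.zero_rpow hq]
    rw [tsum_eq_single j hzero, tsum_eq_single j hzero']

theorem exists_lp_eq_tsum_of_disjoint_support (hr : 0 < r.toReal)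
    {f : ι → lp (fun _ : α => F) r} (hf : Pairwise (Disjoint on fun j => support (f j)))
    (N : lp (fun _ : ι => ℝ) r) (hN : ∀ j, ‖f j‖ ≤ ‖N j‖) :
    ∃ S : lp (fun _ : α => F) r, (∀ n, S n = ∑' j, f j n) ∧ ‖S‖ ≤ ‖N‖ := by
  have hsub := subsingleton_support_of_pairwise_disjoint hf
  have hsummable (n : α) : Summable fun j => ‖f j n‖ ^ r.toReal :=
    summable_of_hasFiniteSupport <| (hsub n).finite.subset fun j hj h0 =>
      hj (by simp [h0, Real.zero_rpow hr.ne'])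
  have hpow (j : ι) : ‖f j‖ ^ r.toReal ≤ ‖N j‖ ^ r.toReal :=
    Real.rpow_le_rpow (lp.norm_nonneg' _) (hN j) hr.le
  have hNsum := (lp.memℓp N).summable hr
  have hsum (s : Finset α) : ∑ n ∈ s, ‖∑' j, f j n‖ ^ r.toReal ≤ ‖N‖ ^ r.toReal := by
    calc ∑ n ∈ s, ‖∑' j, f j n‖ ^ r.toReal
        = ∑ n ∈ s, ∑' j, ‖f j n‖ ^ r.toReal := by
          simp only [norm_tsum_rpow_of_subsingleton_support (hsub _) hr.ne']
      _ = ∑' j, ∑ n ∈ s, ‖f j n‖ ^ r.toReal :=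
          (Summable.tsum_finsetSum fun n _ => hsummable n).symm
      _ ≤ ∑' j, ‖N j‖ ^ r.toReal := by
          refine Summable.tsum_le_tsum (fun j => ?_) (summable_sum fun n _ => hsummable n) hNsum
          exact (lp.sum_rpow_le_norm_rpow hr (f j) s).trans (hpow j)
      _ = ‖N‖ ^ r.toReal := (lp.norm_rpow_eq_tsum hr N).symm
  exact ⟨⟨fun n => ∑' j, f j n, memℓp_gen' hsum⟩, fun _ => rfl,
    lp.norm_le_of_forall_sum_le hr (lp.norm_nonneg' N) hsum⟩

theorem norm_indicator_rpow {q : ℝ} (hq : q ≠ 0) (E : Set α) (f : α → F) (n : α) :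
    ‖E.indicator f n‖ ^ q = E.indicator (fun n => ‖f n‖ ^ q) n := by
  by_cases hn : n ∈ E <;> simp [hn, Real.zero_rpow hq]

theorem lp_norm_eq_tsum_subtype_rpow (hr : 0 < r.toReal) {E : Set α} {f : α → F}
    {g : lp (fun _ : α => F) r} (hg : ⇑g = E.indicator f) :
    ‖g‖ = (∑' n : E, ‖f n‖ ^ r.toReal) ^ (1 / r.toReal) := by
  rw [lp.norm_eq_tsum_rpow hr, tsum_subtype E fun n => ‖f n‖ ^ r.toReal]
  simp only [hg, norm_indicator_rpow hr.ne']

theorem exists_lp_eq_norm_of_disjoint (hr : 0 < r.toReal) {E : ι → Set α}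
    (hE : Pairwise (Disjoint on E)) (f : lp (fun _ : α => F) r)
    {g : ι → lp (fun _ : α => F) r} (hg : ∀ j, ⇑(g j) = (E j).indicator f) :
    ∃ N : lp (fun _ : ι => ℝ) r, (∀ j, N j = ‖g j‖) ∧ ‖N‖ ≤ ‖f‖ := by
  have hsum (s : Finset ι) : ∑ j ∈ s, ‖‖g j‖‖ ^ r.toReal ≤ ‖f‖ ^ r.toReal := by
    have hfsum := (lp.memℓp f).summable hr
    calc ∑ j ∈ s, ‖‖g j‖‖ ^ r.toReal
        = ∑ j ∈ s, ∑' n, ‖g j n‖ ^ r.toReal := by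
          simp only [Real.norm_of_nonneg (lp.norm_nonneg' _), lp.norm_rpow_eq_tsum hr]
      _ = ∑' n, ∑ j ∈ s, ‖g j n‖ ^ r.toReal :=
          (Summable.tsum_finsetSum fun j _ => (lp.memℓp (g j)).summable hr).symm
      _ = ∑' n, (⋃ j ∈ s, E j).indicator (fun n => ‖f n‖ ^ r.toReal) n := by
          simp only [hg, norm_indicator_rpow hr.ne',
            Finset.indicator_biUnion_apply s E fun _ _ _ _ hjk => hE hjk]
      _ ≤ ∑' n, ‖f n‖ ^ r.toReal :=
          (hfsum.indicator _).tsum_le_tsum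
            (Set.indicator_le_self' fun n _ => by positivity) hfsum
      _ = ‖f‖ ^ r.toReal := (lp.norm_rpow_eq_tsum hr f).symm
  exact ⟨⟨fun j => ‖g j‖, memℓp_gen' hsum⟩, fun _ => rfl,
    lp.norm_le_of_forall_sum_le hr (lp.norm_nonneg' f) hsum⟩

end DisjointFamilies

section Retractions

open Submodule

variable {R X Y ι : Type*} [Semiring R]
  [TopologicalSpace X] [AddCommMonoid X] [Module R X] [T2Space X]
  [TopologicalSpace Y] [AddCommMonoid Y] [Module R Y]

theorem range_eq_topologicalClosure_span_of_leftInverse [ContinuousAdd X]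
    [ContinuousConstSMul R X] {A : X →L[R] Y} {T : Y →L[R] X} (hAT : Function.LeftInverse A T)
    {e : ι → Y} (he : Dense (span R (Set.range e) : Set Y)) {z : ι → X} (hT : ∀ j, T (e j) = z j) :
    LinearMap.range (T : Y →ₗ[R] X) = (span R (Set.range z)).topologicalClosure := by
  have hz : span R (Set.range z) = (span R (Set.range e)).map (T : Y →ₗ[R] X) := by
    rw [map_span, ← Set.range_comp]
    exact congrArg (span R <| Set.range ·) (funext fun j => (hT j).symm)
  have hclosed := hAT.isClosedEmbedding A.continuous T.continuous
  apply SetLike.coe_injective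
  rw [topologicalClosure_coe, hz, map_coe]
  exact (Set.image_univ.symm.trans <| by rw [← he.closure_eq]; rfl).trans
    (hclosed.closure_image_eq _).symm

/-- A continuous linear map with a continuous linear left inverse, as an isomorphism onto its
range. -/
def equivRangeOfLeftInverse {A : X →L[R] Y} {T : Y →L[R] X} (hAT : Function.LeftInverse A T) :
    Y ≃L[R] LinearMap.range (T : Y →ₗ[R] X) :=
  .equivOfInverse (T.codRestrict _ (LinearMap.mem_range_self (T : Y →ₗ[R] X)))
    (A ∘L Submodule.subtypeL _) hAT fun ⟨_, y, hy⟩ => Subtype.ext <| by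
      simp [← hy, hAT y]

end Retractions

namespace Xpw

open Function

section Basic

theorem pair_snd_apply (x : Xpw p w) (n : ℕ) : (pair x).2 n = w n * seq x n :=
  (show ↥(XpwMod p w) from x).2 n

theorem ext_seq {x y : Xpw p w} (h : seq x = seq y) : x = y := by
  refine Subtype.ext (Prod.ext (lp.ext h) (lp.ext (funext fun n => ?_)))
  exact (pair_snd_apply x n).trans ((congrArg (w n * · n) h).trans (pair_snd_apply y n).symm)

/-- The `j`-th vector `e_j` of the natural basis of `X_{p,w}`. -/
def single (p : ℝ) (w : ℕ → ℝ) (j : ℕ) : Xpw p w :=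
  show ↥(XpwMod p w) from ⟨(lp.single _ j 1, lp.single 2 j (w j)), fun n => by
    by_cases hn : n = j
    · subst hn; simp
    · simp [hn]⟩

theorem seq_single (j : ℕ) : seq (single p w j) = Pi.single j 1 :=
  lp.coeFn_single _ j 1

theorem nrmP_nonneg (x : Xpw p w) : 0 ≤ nrmP x := lp.norm_nonneg' _

theorem nrm2_nonneg (x : Xpw p w) : 0 ≤ nrm2 x := lp.norm_nonneg' _

theorem nrm2_ne_zero (hw : ∀ n, w n ≠ 0) [Fact (1 ≤ ENNReal.ofReal p)] {x : Xpw p w}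
    (hx : x ≠ 0) : nrm2 x ≠ 0 := by
  contrapose! hx
  refine ext_seq (funext fun n => (mul_eq_zero_iff_left (hw n)).mp ?_)
  rw [← pair_snd_apply, norm_eq_zero.mp hx]
  rfl

theorem seq_restrict (E : Set ℕ) (x : Xpw p w) : seq (restrict E x) = E.indicator (seq x) := rfl

theorem inner_restrict_left (E : Set ℕ) (x y : Xpw p w) :
    inner ℝ (pair (restrict E y)).2 (pair x).2 =
      inner ℝ (pair (restrict E y)).2 (pair (restrict E x)).2 := by
  rw [lp.inner_eq_tsum, lp.inner_eq_tsum]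
  refine tsum_congr fun n => ?_
  by_cases hn : n ∈ E <;> simp [restrict, pair, hn]

end Basic

variable [Fact (1 ≤ ENNReal.ofReal p)]

theorem ofReal_ne_zero : ENNReal.ofReal p ≠ 0 := (zero_lt_one.trans_le Fact.out).ne'

theorem toReal_ofReal_pos : 0 < (ENNReal.ofReal p).toReal :=
  ENNReal.toReal_pos ofReal_ne_zero ENNReal.ofReal_ne_top

theorem norm_eq_max (x : Xpw p w) : ‖x‖ = max (nrmP x) (nrm2 x) := rfl

/-- `Xpw.pair` as a linear isometry of `X_{p,w}` into `ℓ_p ⊕_∞ ℓ_2`. -/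
def pairₗᵢ : Xpw p w →ₗᵢ[ℝ] SeqP p × Seq2 := (XpwMod p w).subtypeₗᵢ

theorem seq_add (x y : Xpw p w) : seq (x + y) = seq x + seq y := rfl

theorem seq_smul (a : ℝ) (x : Xpw p w) : seq (a • x) = a • seq x := rfl

/-- `seq` as a linear map. -/
def seqₗ : Xpw p w →ₗ[ℝ] ℕ → ℝ where
  toFun := seq
  map_add' := seq_add
  map_smul' := seq_smul

theorem seqₗ_apply (x : Xpw p w) : seqₗ x = seq x := rfl

theorem hasSum_seq_smul_single (x : Xpw p w) : HasSum (fun j => seq x j • single p w j) x := by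
  rw [← pairₗᵢ.isometry.isUniformInducing.isInducing.hasSum_iff (g := (pairₗᵢ (p := p) (w := w)))]
  have hterm (j : ℕ) : pairₗᵢ (seq x j • single p w j) =
      (lp.single _ j (seq x j), lp.single 2 j ((pair x).2 j)) := by
    refine Prod.ext ?_ ?_
    · rw [← mul_one (seq x j), ← smul_eq_mul, lp.single_smul, smul_eq_mul, mul_one]
      rfl
    · rw [pair_snd_apply, mul_comm, ← smul_eq_mul, lp.single_smul]
      rfl
  rw [show pairₗᵢ ∘ (fun j => seq x j • single p w j) = _ from funext hterm]
  exact (lp.hasSum_single ENNReal.ofReal_ne_top (pair x).1).prodMk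
    (lp.hasSum_single ENNReal.ofNat_ne_top (pair x).2)

theorem dense_span_range_single :
    Dense (Submodule.span ℝ (Set.range (single p w)) : Set (Xpw p w)) := fun x =>
  mem_closure_of_tendsto (hasSum_seq_smul_single x) <| .of_forall fun _ =>
    Submodule.sum_mem _ fun j _ => Submodule.smul_mem _ _ (Submodule.subset_span ⟨j, rfl⟩)

theorem leftInverse_of_apply_single {X : Type*} [TopologicalSpace X] [AddCommMonoid X] [Module ℝ X]
    {A : X →L[ℝ] Xpw p w} {T : Xpw p w →L[ℝ] X}
    (h : ∀ j, A (T (single p w j)) = single p w j) : LeftInverse A T := by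
  have hid : A ∘L T = .id ℝ (Xpw p w) :=
    ContinuousLinearMap.ext_on dense_span_range_single (Set.forall_mem_range.mpr h)
  exact fun x => congrArg (· x) hid

section MixedBound

variable {u v : ℕ → ℝ} {C C' D D' : ℝ}

/-- The operator `A` between spaces `X_{p,·}` is bounded by `C` for `|·|_p` and, separately,
by `D` for `|·|_2`.  Such bounds, unlike norm bounds, are multiplied without loss under
composition when `C` and `D` play different roles. -/
def HasMixedBound (A : Xpw p w →L[ℝ] Xpw p v) (C D : ℝ) : Prop :=
  ∀ x, nrmP (A x) ≤ C * nrmP x ∧ nrm2 (A x) ≤ D * nrm2 x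

theorem HasMixedBound.comp {B : Xpw p v →L[ℝ] Xpw p u} {A : Xpw p w →L[ℝ] Xpw p v}
    (hB : HasMixedBound B C' D') (hA : HasMixedBound A C D) (hC' : 0 ≤ C') (hD' : 0 ≤ D') :
    HasMixedBound (B ∘L A) (C' * C) (D' * D) := fun x => by
  constructor
  · calc nrmP (B (A x)) ≤ C' * nrmP (A x) := (hB _).1
      _ ≤ C' * (C * nrmP x) := by gcongr; exact (hA x).1
      _ = C' * C * nrmP x := (mul_assoc _ _ _).symm
  · calc nrm2 (B (A x)) ≤ D' * nrm2 (A x) := (hB _).2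
      _ ≤ D' * (D * nrm2 x) := by gcongr; exact (hA x).2
      _ = D' * D * nrm2 x := (mul_assoc _ _ _).symm

theorem norm_le_max_mul_norm (hC : 0 ≤ C) {x : Xpw p w} {y : Xpw p v}
    (hP : nrmP y ≤ C * nrmP x) (h2 : nrm2 y ≤ D * nrm2 x) : ‖y‖ ≤ max C D * ‖x‖ := by
  have hmax : 0 ≤ max C D := hC.trans (le_max_left _ _)
  rw [norm_eq_max, norm_eq_max x]
  exact max_le
    (hP.trans (mul_le_mul (le_max_left _ _) (le_max_left _ _) (nrmP_nonneg x) hmax))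
    (h2.trans (mul_le_mul (le_max_right _ _) (le_max_right _ _) (nrm2_nonneg x) hmax))

theorem HasMixedBound.opNorm_le {A : Xpw p w →L[ℝ] Xpw p v} (hA : HasMixedBound A C D)
    (hC : 0 ≤ C) : ‖A‖ ≤ max C D :=
  A.opNorm_le_bound (hC.trans (le_max_left _ _)) fun x =>
    norm_le_max_mul_norm hC (hA x).1 (hA x).2

theorem exists_clm_seq_eq (hC : 0 ≤ C) (L : Xpw p w →ₗ[ℝ] ℕ → ℝ)
    (hP : ∀ x, ∃ y : SeqP p, ⇑y = L x ∧ ‖y‖ ≤ C * nrmP x)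
    (h2 : ∀ x, ∃ y : Seq2, (⇑y = fun n => v n * L x n) ∧ ‖y‖ ≤ D * nrm2 x) :
    ∃ A : Xpw p w →L[ℝ] Xpw p v, (∀ x, seq (A x) = L x) ∧ HasMixedBound A C D := by
  choose yP hyP hyP_le using hP
  choose y2 hy2 hy2_le using h2
  let f : Xpw p w → Xpw p v := fun x => show ↥(XpwMod p v) from
    ⟨(yP x, y2 x), fun n => by simp only [hyP, hy2]⟩
  have hf (x : Xpw p w) : seq (f x) = L x := hyP x
  let A : Xpw p w →ₗ[ℝ] Xpw p v :=
    { toFun := f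
      map_add' := fun x y => ext_seq <| by rw [seq_add, hf, hf, hf, map_add]
      map_smul' := fun a x => ext_seq <| by rw [RingHom.id_apply, seq_smul, hf, hf, map_smul] }
  exact ⟨A.mkContinuous (max C D) fun x => norm_le_max_mul_norm hC (hyP_le x) (hy2_le x), hf,
    fun x => ⟨hyP_le x, hy2_le x⟩⟩

theorem exists_clm_seq_eq_self (hD : 0 ≤ D) (hvw : ∀ n, |v n| ≤ D * |w n|) :
    ∃ A : Xpw p w →L[ℝ] Xpw p v, ∀ x, seq (A x) = seq x := by
  obtain ⟨A, hA, -⟩ := exists_clm_seq_eq (v := v) (D := D) zero_le_one (seqₗ (p := p) (w := w))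
    (fun x => ⟨(pair x).1, rfl, (one_mul _).ge⟩)
    (fun x => exists_lp_eq_of_norm_le_mul two_ne_zero hD (pair x).2 fun n => by
      rw [seqₗ_apply, pair_snd_apply, norm_mul, norm_mul, ← mul_assoc]
      gcongr
      exact hvw n)
  exact ⟨A, hA⟩

theorem nonempty_equiv_of_abs_le (hD : 0 ≤ D) (hvw : ∀ n, |v n| ≤ |w n|)
    (hwv : ∀ n, |w n| ≤ D * |v n|) : Nonempty (Xpw p w ≃L[ℝ] Xpw p v) := by
  obtain ⟨A, hA⟩ := exists_clm_seq_eq_self (p := p) zero_le_one fun n =>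
    (hvw n).trans_eq (one_mul _).symm
  obtain ⟨B, hB⟩ := exists_clm_seq_eq_self (p := p) hD hwv
  exact ⟨.equivOfInverse A B (fun x => ext_seq <| by rw [hB, hA])
    (fun x => ext_seq <| by rw [hA, hB])⟩

end MixedBound

section Restriction

variable {E : Set ℕ}

theorem nrmP_restrict_le (x : Xpw p w) : nrmP (restrict E x) ≤ nrmP x :=
  lp.norm_mono ofReal_ne_zero fun n => norm_indicator_le_norm_self (seq x) n

theorem nrm2_restrict_le_omegaE_rpow_mul (hp : 2 < p) (hw : ∀ n, 0 ≤ w n)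
    (hE : Summable fun n : E => w n ^ (2 * p / (p - 2))) (x : Xpw p w) :
    nrm2 (restrict E x) ≤ omegaE p w E ^ ((p - 2) / (2 * p)) * nrmP (restrict E x) := by
  have hp0 : 0 < p := two_pos.trans hp
  have hp2 : 0 < p - 2 := sub_pos.mpr hp
  have hpr : (ENNReal.ofReal p).toReal = p := ENNReal.toReal_ofReal hp0.le
  have hconj : (2 * p / (p - 2)).HolderTriple p 2 :=
    ⟨by field_simp; ring, div_pos (mul_pos two_pos hp0) hp2, hp0⟩
  have hx : Summable fun n : E => ‖seq x n‖ ^ p := by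
    have hsum := (lp.memℓp (pair x).1).summable toReal_ofReal_pos
    rw [hpr] at hsum
    exact hsum.subtype E
  have hP : nrmP (restrict E x) = (∑' n : E, ‖seq x n‖ ^ p) ^ (1 / p) := by
    rw [nrmP, lp_norm_eq_tsum_subtype_rpow toReal_ofReal_pos (f := (pair x).1) rfl, hpr]
    rfl
  have h2 : nrm2 (restrict E x) = (∑' n : E, (w n * ‖seq x n‖) ^ (2 : ℝ)) ^ (1 / (2 : ℝ)) := by
    rw [nrm2, lp_norm_eq_tsum_subtype_rpow (by simp) (f := (pair x).2) rfl]
    simp only [pair_snd_apply, norm_mul, Real.norm_of_nonneg (hw _), ENNReal.toReal_ofNat]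
  rw [h2, hP, ← one_div_div (2 * p) (p - 2)]
  exact Real.Lr_le_Lp_mul_Lq_tsum_of_nonneg hconj (fun n => hw n) (fun n => norm_nonneg _) hE hx

/-- The coefficient of `y_{|E}` in the orthogonal projection, with respect to the weighted
`ℓ_2` inner product, of `x` onto the line spanned by `y_{|E}`. -/
def restrictCoeff (E : Set ℕ) (y : Xpw p w) : Xpw p w →ₗ[ℝ] ℝ :=
  (nrm2 (restrict E y) ^ 2)⁻¹ •
    (innerₛₗ ℝ (pair (restrict E y)).2 ∘ₗ LinearMap.snd ℝ (SeqP p) Seq2 ∘ₗ pairₗᵢ.toLinearMap)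

theorem restrictCoeff_apply (x y : Xpw p w) : restrictCoeff E y x =
    (nrm2 (restrict E y) ^ 2)⁻¹ * inner ℝ (pair (restrict E y)).2 (pair (restrict E x)).2 :=
  congrArg ((nrm2 (restrict E y) ^ 2)⁻¹ * ·) (inner_restrict_left E x y)

theorem abs_restrictCoeff_mul_le (x y : Xpw p w) :
    |restrictCoeff E y x| * nrm2 (restrict E y) ≤ nrm2 (restrict E x) := by
  set b := nrm2 (restrict E y) with hb
  obtain hb0 | hb0 := (nrm2_nonneg (restrict E y)).eq_or_lt
  · rw [hb, ← hb0, mul_zero]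
    exact nrm2_nonneg _
  calc |restrictCoeff E y x| * b
      = (b ^ 2)⁻¹ * |inner ℝ (pair (restrict E y)).2 (pair (restrict E x)).2| * b := by
        rw [restrictCoeff_apply, abs_mul, abs_of_nonneg (by positivity)]
    _ ≤ (b ^ 2)⁻¹ * (b * nrm2 (restrict E x)) * b := by
        gcongr
        exact abs_real_inner_le_norm _ _
    _ = nrm2 (restrict E x) := by
        have hb_ne : b ≠ 0 := hb0.ne'
        field_simp

theorem restrictCoeff_self {y : Xpw p w} (hy : nrm2 (restrict E y) ≠ 0) :
    restrictCoeff E y y = 1 := by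
  rw [restrictCoeff_apply, real_inner_self_eq_norm_sq]
  exact inv_mul_cancel₀ (pow_ne_zero 2 hy)

theorem restrictCoeff_of_disjoint {x y : Xpw p w}
    (hxy : Disjoint (support (seq x)) (support (seq y))) : restrictCoeff E y x = 0 := by
  have hterm (n : ℕ) :
      inner ℝ ((pair (restrict E y)).2 n) ((pair (restrict E x)).2 n) = 0 := by
    obtain hx | hy : seq x n = 0 ∨ seq y n = 0 := by
      by_contra! h
      exact Set.disjoint_left.mp hxy h.1 h.2
    · simp [pair_snd_apply, seq_restrict, hx]
    · simp [pair_snd_apply, seq_restrict, hy]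
  rw [restrictCoeff_apply, lp.inner_eq_tsum]
  simp only [hterm, tsum_zero, mul_zero]

theorem restrictCoeff_eq_single {z : ℕ → Xpw p w} {E : ℕ → Set ℕ}
    (hz : Pairwise (Disjoint on fun j => support (seq (z j))))
    (hE : ∀ j, nrm2 (restrict (E j) (z j)) ≠ 0) (j k : ℕ) :
    restrictCoeff (E k) (z k) (z j) = (Pi.single j 1 : ℕ → ℝ) k := by
  obtain rfl | hjk := eq_or_ne j k
  · rw [restrictCoeff_self (hE j), Pi.single_eq_same]
  · rw [restrictCoeff_of_disjoint (hz hjk), Pi.single_eq_of_ne' hjk]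

end Restriction

section AnalysisSynthesis

variable {E : ℕ → Set ℕ} {z : ℕ → Xpw p w} {C D : ℝ}

theorem exists_clm_seq_eq_restrictCoeff (hC : 0 ≤ C) (hE : Pairwise (Disjoint on E))
    (hz : ∀ j, nrm2 (restrict (E j) (z j)) ≠ 0)
    (hCE : ∀ j (x : Xpw p w), nrm2 (restrict (E j) x) ≤
      C * nrm2 (restrict (E j) (z j)) * nrmP (restrict (E j) x)) :
    ∃ A : Xpw p w →L[ℝ] Xpw p fun j => nrm2 (restrict (E j) (z j)),
      (∀ x j, seq (A x) j = restrictCoeff (E j) (z j) x) ∧ HasMixedBound A C 1 := by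
  have hb (j : ℕ) : 0 < nrm2 (restrict (E j) (z j)) := (nrm2_nonneg _).lt_of_ne' (hz j)
  have hP (x : Xpw p w) : ∃ y : SeqP p,
      (⇑y = fun j => restrictCoeff (E j) (z j) x) ∧ ‖y‖ ≤ C * nrmP x := by
    obtain ⟨N, hN, hN_le⟩ := exists_lp_eq_norm_of_disjoint toReal_ofReal_pos hE (pair x).1
      (g := fun j => (pair (restrict (E j) x)).1) fun j => rfl
    obtain ⟨y, hy, hy_le⟩ := exists_lp_eq_of_norm_le_mul ofReal_ne_zero hC N
      (f := fun j => restrictCoeff (E j) (z j) x) fun j => by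
        rw [hN, Real.norm_of_nonneg (lp.norm_nonneg' _)]
        refine le_of_mul_le_mul_right ?_ (hb j)
        exact (abs_restrictCoeff_mul_le x (z j)).trans ((hCE j x).trans_eq (mul_right_comm _ _ _))
    exact ⟨y, hy, hy_le.trans (mul_le_mul_of_nonneg_left hN_le hC)⟩
  have h2 (x : Xpw p w) : ∃ y : Seq2,
      (⇑y = fun j => nrm2 (restrict (E j) (z j)) * restrictCoeff (E j) (z j) x) ∧
        ‖y‖ ≤ 1 * nrm2 x := by
    obtain ⟨N, hN, hN_le⟩ := exists_lp_eq_norm_of_disjoint (by simp) hE (pair x).2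
      (g := fun j => (pair (restrict (E j) x)).2) fun j => rfl
    obtain ⟨y, hy, hy_le⟩ := exists_lp_eq_of_norm_le_mul two_ne_zero zero_le_one N
      (f := fun j => nrm2 (restrict (E j) (z j)) * restrictCoeff (E j) (z j) x) fun j => by
        rw [hN, one_mul, Real.norm_of_nonneg (lp.norm_nonneg' _), norm_mul,
          Real.norm_of_nonneg (nrm2_nonneg _), mul_comm]
        exact abs_restrictCoeff_mul_le x (z j)
    exact ⟨y, hy, hy_le.trans (mul_le_mul_of_nonneg_left hN_le zero_le_one)⟩
  obtain ⟨A, hA, hbound⟩ :=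
    exists_clm_seq_eq hC (LinearMap.pi fun j => restrictCoeff (E j) (z j)) hP h2
  exact ⟨A, fun x j => congrFun (hA x) j, hbound⟩

/-- The linear map taking `a ∈ X_{p,v}` to the coordinates of `∑ j, a j • z j`, summed
coordinatewise, where the `z j` have disjoint supports. -/
def blockSumₗ (v : ℕ → ℝ) (hz : Pairwise (Disjoint on fun j => support (seq (z j)))) :
    Xpw p v →ₗ[ℝ] ℕ → ℝ :=
  have hsummable (a : Xpw p v) (n : ℕ) : Summable fun j => seq a j * seq (z j) n :=
    summable_of_hasFiniteSupport <| (subsingleton_support_of_pairwise_disjoint hz n).finite.subset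
      fun _ => right_ne_zero_of_mul
  { toFun := fun a n => ∑' j, seq a j * seq (z j) n
    map_add' := fun a b => funext fun n => by
      simp only [seq_add, Pi.add_apply, add_mul, (hsummable a n).tsum_add (hsummable b n)]
    map_smul' := fun r a => funext fun n => by
      simp only [seq_smul, Pi.smul_apply, smul_eq_mul, mul_assoc, tsum_mul_left,
        RingHom.id_apply] }

theorem blockSumₗ_apply {v : ℕ → ℝ} (hz : Pairwise (Disjoint on fun j => support (seq (z j))))
    (a : Xpw p v) (n : ℕ) : blockSumₗ v hz a n = ∑' j, seq a j * seq (z j) n :=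
  rfl

theorem exists_clm_apply_single_eq {v : ℕ → ℝ} (hD : 0 ≤ D)
    (hz : Pairwise (Disjoint on fun j => support (seq (z j)))) (hzP : ∀ j, nrmP (z j) ≤ 1)
    (hz2 : ∀ j, nrm2 (z j) ≤ D * |v j|) :
    ∃ T : Xpw p v →L[ℝ] Xpw p w, (∀ j, T (single p v j) = z j) ∧ HasMixedBound T 1 D := by
  have hP (a : Xpw p v) : ∃ y : SeqP p, ⇑y = blockSumₗ v hz a ∧ ‖y‖ ≤ 1 * nrmP a := by
    obtain ⟨S, hS, hS_le⟩ := exists_lp_eq_tsum_of_disjoint_support toReal_ofReal_pos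
      (f := fun j => seq a j • (pair (z j)).1)
      (hz.mono fun j k h => h.mono (support_const_smul_subset _ _) (support_const_smul_subset _ _))
      (pair a).1 fun j => by
        rw [norm_smul]
        exact mul_le_of_le_one_right (norm_nonneg _) (hzP j)
    exact ⟨S, funext hS, hS_le.trans_eq (one_mul _).symm⟩
  have h2 (a : Xpw p v) : ∃ y : Seq2,
      (⇑y = fun n => w n * blockSumₗ v hz a n) ∧ ‖y‖ ≤ D * nrm2 a := by
    have hsupp (j : ℕ) : support (seq a j • (pair (z j)).2) ⊆ support (seq (z j)) := fun n hn h =>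
      hn (by simp [pair_snd_apply, h])
    obtain ⟨S, hS, hS_le⟩ := exists_lp_eq_tsum_of_disjoint_support (by simp)
      (f := fun j => seq a j • (pair (z j)).2) (hz.mono fun j k h => h.mono (hsupp j) (hsupp k))
      (D • (pair a).2) fun j => by
        rw [norm_smul]
        calc ‖seq a j‖ * nrm2 (z j) ≤ ‖seq a j‖ * (D * |v j|) := by gcongr; exact hz2 j
          _ = ‖(D • (pair a).2) j‖ := by
            rw [lp.coeFn_smul, Pi.smul_apply, norm_smul, pair_snd_apply, norm_mul,
              Real.norm_of_nonneg hD, Real.norm_eq_abs (v j)]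
            ring
    refine ⟨S, funext fun n => ?_, hS_le.trans_eq ?_⟩
    · rw [hS, blockSumₗ_apply, ← tsum_mul_left]
      refine tsum_congr fun j => ?_
      rw [lp.coeFn_smul, Pi.smul_apply, smul_eq_mul, pair_snd_apply, mul_left_comm]
    · rw [norm_smul, Real.norm_of_nonneg hD, nrm2]
  obtain ⟨T, hT, hbound⟩ := exists_clm_seq_eq zero_le_one (blockSumₗ v hz) hP h2
  refine ⟨T, fun j => ext_seq (funext fun n => ?_), hbound⟩
  rw [hT, blockSumₗ_apply, seq_single, tsum_eq_single j fun k hk => by simp [hk]]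
  simp

theorem exists_projection_span_and_nonempty_equiv (hC : 0 ≤ C) (hD : 0 ≤ D)
    (hz : Pairwise (Disjoint on fun j => support (seq (z j)))) (hE : Pairwise (Disjoint on E))
    (hzP : ∀ j, nrmP (z j) ≤ 1) (hz2 : ∀ j, nrm2 (z j) ≤ D * nrm2 (restrict (E j) (z j)))
    (hzE : ∀ j, nrm2 (restrict (E j) (z j)) ≠ 0)
    (hCE : ∀ j (x : Xpw p w), nrm2 (restrict (E j) x) ≤
      C * nrm2 (restrict (E j) (z j)) * nrmP (restrict (E j) x)) :
    (∃ P : Xpw p w →L[ℝ] Xpw p w,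
      (∀ x : Xpw p w, P (P x) = P x) ∧
      LinearMap.range (P : Xpw p w →ₗ[ℝ] Xpw p w) =
        (Submodule.span ℝ (Set.range z)).topologicalClosure ∧
      ‖P‖ ≤ max C D) ∧
    Nonempty (↥((Submodule.span ℝ (Set.range z)).topologicalClosure) ≃L[ℝ]
      Xpw p (fun j => nrm2 (restrict (E j) (z j)))) := by
  obtain ⟨A, hA, hA_bound⟩ := exists_clm_seq_eq_restrictCoeff hC hE hzE hCE
  obtain ⟨T, hT, hT_bound⟩ := exists_clm_apply_single_eq hD hz hzP fun j =>
    (hz2 j).trans_eq (by rw [abs_of_nonneg (nrm2_nonneg _)])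
  have hAT : LeftInverse A T := leftInverse_of_apply_single fun j =>
    ext_seq <| funext fun k => by rw [hT, hA, restrictCoeff_eq_single hz hzE, seq_single]
  have hbound : HasMixedBound (T ∘L A) C D := by
    simpa only [one_mul, mul_one] using hT_bound.comp hA_bound zero_le_one hD
  rw [← range_eq_topologicalClosure_span_of_leftInverse hAT dense_span_range_single hT]
  exact ⟨⟨T ∘L A, fun x => congrArg T (hAT (A x)),
    LinearMap.range_comp_of_range_eq_top _ (LinearMap.range_eq_top.mpr hAT.surjective),
    hbound.opNorm_le hC⟩, ⟨(equivRangeOfLeftInverse hAT).symm⟩⟩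

end AnalysisSynthesis

end Xpw

open Xpw in
theorem stmt5_general (p : ℝ) (hp : 2 < p) [Fact (1 ≤ ENNReal.ofReal p)]
    (w : ℕ → ℝ) (hw : ∀ n, 0 ≤ w n)
    (z : ℕ → Xpw p w) (hzP : ∀ j, nrmP (z j) ≤ 1) (hz2 : ∀ j, nrm2 (z j) ≠ 0)
    (hz : Pairwise (Function.onFun Disjoint fun j => Function.support (seq (z j))))
    (E : ℕ → Set ℕ) (hE : Pairwise (Function.onFun Disjoint E))
    (hω : ∀ j, Summable fun n : E j => w n ^ (2 * p / (p - 2)))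
    (c δ : ℝ) (hδ : 0 < δ)
    (ha : ∀ j, nrm2 (restrict (E j) (z j)) ≥ δ * nrm2 (z j))
    (hb : ∀ j, c * nrm2 (restrict (E j) (z j)) ≥ omegaE p w (E j) ^ ((p - 2) / (2 * p))) :
    (∃ P : Xpw p w →L[ℝ] Xpw p w,
      (∀ x : Xpw p w, P (P x) = P x) ∧
      LinearMap.range (P : Xpw p w →ₗ[ℝ] Xpw p w) =
        (Submodule.span ℝ (Set.range z)).topologicalClosure ∧
      ‖P‖ ≤ max δ⁻¹ c) ∧
    Nonempty (↥((Submodule.span ℝ (Set.range z)).topologicalClosure) ≃L[ℝ]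
      Xpw p (fun j => omegaE p w (E j) ^ ((p - 2) / (2 * p)))) := by
  set b : ℕ → ℝ := fun j => nrm2 (restrict (E j) (z j))
  set w' : ℕ → ℝ := fun j => omegaE p w (E j) ^ ((p - 2) / (2 * p))
  have hb_pos (j : ℕ) : 0 < b j :=
    (mul_pos hδ ((nrm2_nonneg _).lt_of_ne' (hz2 j))).trans_le (ha j)
  have hw'_nonneg (j : ℕ) : 0 ≤ w' j :=
    Real.rpow_nonneg (tsum_nonneg fun n : E j => Real.rpow_nonneg (hw n) _) _
  have hc : 0 ≤ c := nonneg_of_mul_nonneg_left ((hw'_nonneg 0).trans (hb 0)) (hb_pos 0)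
  have hbw' (j : ℕ) : b j ≤ w' j := (nrm2_restrict_le_omegaE_rpow_mul hp hw (hω j) (z j)).trans
    (mul_le_of_le_one_right (hw'_nonneg j) ((nrmP_restrict_le _).trans (hzP j)))
  have hbδ (j : ℕ) : nrm2 (z j) ≤ δ⁻¹ * b j := (le_inv_mul_iff₀ hδ).mpr (ha j)
  have hHolder (j : ℕ) (x : Xpw p w) :
      nrm2 (restrict (E j) x) ≤ c * b j * nrmP (restrict (E j) x) :=
    (nrm2_restrict_le_omegaE_rpow_mul hp hw (hω j) x).trans
      (mul_le_mul_of_nonneg_right (hb j) (nrmP_nonneg _))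
  obtain ⟨hP, ⟨e⟩⟩ := exists_projection_span_and_nonempty_equiv hc (inv_pos.mpr hδ).le hz hE hzP hbδ
    (fun j => (hb_pos j).ne') hHolder
  obtain ⟨e'⟩ := nonempty_equiv_of_abs_le (p := p) (w := w') (v := b) hc
    (fun j => abs_le_abs_of_nonneg (hb_pos j).le (hbw' j))
    (fun j => by rw [abs_of_pos (hb_pos j), abs_of_nonneg (hw'_nonneg j)]; exact hb j)
  exact ⟨max_comm c δ⁻¹ ▸ hP, ⟨e.trans e'.symm⟩⟩

/-- Proposition 1.2: if `(z_j)` is a normalized block basis of the natural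
basis of `X_p`, `(E_j)` are pairwise disjoint sets with `E_j` contained in the support of
`z_j`, and (a) `|z_{j|E_j}|_2 ≥ δ |z_j|_2`, (b) `c |z_{j|E_j}|_2 ≥ ω(E_j)^{(p-2)/(2p)}`
for all `j`, then `[z_j]` is complemented in `X_p` by a projection of norm at most
`max {δ⁻¹, c}`, and `[z_j]` is isomorphic to `X_{p,w'}` where
`w'_j = ω(E_j)^{(p-2)/(2p)}`. -/
theorem stmt5 (p : ℝ) (hp : 2 < p) [Fact (1 ≤ ENNReal.ofReal p)]
    (w : ℕ → ℝ) (hw : IsXpWeight p w)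
    (z : ℕ → Xpw p w) (hz1 : ∀ j, ‖z j‖ = 1)
    (hfin : ∀ j, (Function.support (seq (z j))).Finite)
    (hblock : ∀ j k : ℕ, j < k → ∀ m ∈ Function.support (seq (z j)),
      ∀ n ∈ Function.support (seq (z k)), m < n)
    (E : ℕ → Set ℕ) (hE : ∀ j, E j ⊆ Function.support (seq (z j)))
    (hdisj : Pairwise (Function.onFun Disjoint E))
    (c δ : ℝ) (hc : 0 < c) (hδ : 0 < δ)
    (ha : ∀ j, nrm2 (restrict (E j) (z j)) ≥ δ * nrm2 (z j))
    (hb : ∀ j, c * nrm2 (restrict (E j) (z j)) ≥ omegaE p w (E j) ^ ((p - 2) / (2 * p))) :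
    (∃ P : Xpw p w →L[ℝ] Xpw p w,
      (∀ x : Xpw p w, P (P x) = P x) ∧
      LinearMap.range (P : Xpw p w →ₗ[ℝ] Xpw p w) = (Submodule.span ℝ (Set.range z)).topologicalClosure ∧
      ‖P‖ ≤ max δ⁻¹ c) ∧
    Nonempty (↥((Submodule.span ℝ (Set.range z)).topologicalClosure) ≃L[ℝ]
      Xpw p (fun j => omegaE p w (E j) ^ ((p - 2) / (2 * p)))) := by
  have hz2 (j : ℕ) : nrm2 (z j) ≠ 0 :=
    Xpw.nrm2_ne_zero (fun n => (hw.1 n).ne') (norm_ne_zero_iff.mp (by simp [hz1 j]))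
  exact stmt5_general p hp w (fun n => (hw.1 n).le) z (fun j => (le_max_left _ _).trans_eq (hz1 j))
    hz2 (pairwise_disjoint_support_of_block hblock) E hdisj
    (fun j => have := ((hfin j).subset (hE j)).to_subtype; .of_finite) c δ hδ ha hb
end
end

section
/- Let X be a complemented subspace of X_p which is isomorphic to a complemented subspace of ℓ_p ⊕ ℓ_2. Then there exist a subspace Z of X and positive constants ε, β, β' with ε ≤ 1 such that (a) r(z) ≥ β' for all nonzero z ∈ Z, and (b) for every x ∈ X with r(x) > β there exists z ∈ Z with |x − z|_2 < ε·|x|_2. -/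
open scoped ENNReal

noncomputable section

variable {p : ℝ} {w : ℕ → ℝ}

/-!
If `r(x) > β`, then `‖x‖ < (1 + β⁻¹)|x|_2`, so it suffices to approximate in `|·|_2` up to a small
multiple of `‖x‖`.  The identity of `X` factors through `ℓ_p ⊕ ℓ_2`.  By Pitt's theorem the part of
the map `T : X → ℓ_2`, `T x = w·x`, that passes through `ℓ_p` is compact, so up to an arbitrarily
small error `T` factors as `X → G → X → ℓ_2` with a Hilbert space `G`.  Cutting `G → ℓ_2` spectrally
splits `G` into a part on which it is small and a part on which it is bounded below; the image `Z`
in `X` of the latter has `r` bounded below and approximates `X` in `|·|_2`.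
-/

open Filter Topology ContinuousLinearMap
open scoped InnerProductSpace

section Normalization

variable (𝕜 : Type*) {F : Type*} [RCLike 𝕜] [NormedAddCommGroup F] [NormedSpace 𝕜 F]

theorem norm_inv_norm_smul_le_one (x : F) : ‖(‖x‖ : 𝕜)⁻¹ • x‖ ≤ 1 := by
  rw [norm_smul, norm_inv, RCLike.norm_ofReal, abs_norm]
  exact inv_mul_le_one

theorem norm_smul_inv_norm_smul_self (x : F) : (‖x‖ : 𝕜) • (‖x‖ : 𝕜)⁻¹ • x = x := by
  rcases eq_or_ne x 0 with rfl | h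
  · simp
  · rw [smul_inv_smul₀ (by simpa using h)]

end Normalization

section SquareRoot

variable (𝕜 : Type*) {A : Type*} [RCLike 𝕜] [NormedRing A] [NormedAlgebra 𝕜 A]

/-- The iterates of `y ↦ (s + y²) / 2` from `0`.  Their limit `y` satisfies `(1 - y)² = 1 - s`, so
that `1 - y` is a square root of `1 - s`.  Unlike the continuous functional calculus, this also
works in real operator algebras. -/
def sqrtIterate (s : A) : ℕ → A
  | 0 => 0
  | n + 1 => (2⁻¹ : 𝕜) • (s + sqrtIterate s n * sqrtIterate s n)

theorem sqrtIterate_one_mem_Icc (n : ℕ) : sqrtIterate ℝ (1 : ℝ) n ∈ Set.Icc 0 1 := by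
  induction n with
  | zero => simp [sqrtIterate]
  | succ n ih =>
    obtain ⟨h0, h1⟩ := ih
    simp only [sqrtIterate, smul_eq_mul]
    constructor <;> nlinarith

theorem commute_sqrtIterate {s a : A} (h : Commute s a) (n : ℕ) :
    Commute (sqrtIterate 𝕜 s n) a := by
  induction n with
  | zero => exact Commute.zero_left a
  | succ n ih => exact (h.add_left (ih.mul_left ih)).smul_left _

theorem isSelfAdjoint_sqrtIterate [StarRing A] [StarModule 𝕜 A] {s : A} (hs : IsSelfAdjoint s)
    (n : ℕ) : IsSelfAdjoint (sqrtIterate 𝕜 s n) := by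
  induction n with
  | zero => exact IsSelfAdjoint.zero A
  | succ n ih =>
    refine IsSelfAdjoint.smul ?_ (hs.add ((ih.commute_iff ih).1 rfl))
    simp [isSelfAdjoint_iff]

-- The scalar iteration with `s = 1` is increasing and bounded, and dominates all the others.
theorem norm_sqrtIterate_le {s : A} (hs : ‖s‖ ≤ 1) (n : ℕ) :
    ‖sqrtIterate 𝕜 s n‖ ≤ sqrtIterate ℝ (1 : ℝ) n := by
  induction n with
  | zero => simp [sqrtIterate]
  | succ n ih =>
    simp only [sqrtIterate, smul_eq_mul, norm_smul, norm_inv, RCLike.norm_ofNat]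
    gcongr
    refine (norm_add_le _ _).trans (add_le_add hs ((norm_mul_le _ _).trans ?_))
    gcongr
    exact (sqrtIterate_one_mem_Icc n).1

theorem sqrtIterate_succ_sub_succ (s : A) (n : ℕ) :
    sqrtIterate 𝕜 s (n + 2) - sqrtIterate 𝕜 s (n + 1) =
      (2⁻¹ : 𝕜) • ((sqrtIterate 𝕜 s (n + 1) + sqrtIterate 𝕜 s n) *
        (sqrtIterate 𝕜 s (n + 1) - sqrtIterate 𝕜 s n)) := by
  have hcomm : Commute (sqrtIterate 𝕜 s (n + 1)) (sqrtIterate 𝕜 s n) :=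
    commute_sqrtIterate 𝕜 (commute_sqrtIterate 𝕜 (Commute.refl s) n).symm (n + 1)
  rw [← hcomm.mul_self_sub_mul_self_eq, ← add_sub_add_left_eq_sub (_ * _) _ s, smul_sub]
  rfl

theorem norm_sqrtIterate_succ_sub_le {s : A} (hs : ‖s‖ ≤ 1) (n : ℕ) :
    ‖sqrtIterate 𝕜 s (n + 1) - sqrtIterate 𝕜 s n‖ ≤
      sqrtIterate ℝ (1 : ℝ) (n + 1) - sqrtIterate ℝ (1 : ℝ) n := by
  induction n with
  | zero =>
    simp only [sqrtIterate, mul_zero, add_zero, sub_zero, norm_smul, norm_inv, RCLike.norm_ofNat,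
      smul_eq_mul]
    gcongr
  | succ n ih =>
    rw [sqrtIterate_succ_sub_succ, sqrtIterate_succ_sub_succ, norm_smul, norm_inv,
      RCLike.norm_ofNat, smul_eq_mul]
    gcongr
    refine (norm_mul_le _ _).trans (mul_le_mul ?_ ih (norm_nonneg _) ?_)
    · exact norm_add_le_of_le (norm_sqrtIterate_le 𝕜 hs _) (norm_sqrtIterate_le 𝕜 hs n)
    · exact add_nonneg (sqrtIterate_one_mem_Icc _).1 (sqrtIterate_one_mem_Icc n).1

theorem exists_tendsto_sqrtIterate [CompleteSpace A] {s : A} (hs : ‖s‖ ≤ 1) :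
    ∃ y, Tendsto (sqrtIterate 𝕜 s) atTop (𝓝 y) := by
  refine cauchySeq_tendsto_of_complete (cauchySeq_of_dist_le_of_summable
    (fun n ↦ sqrtIterate ℝ (1 : ℝ) (n + 1) - sqrtIterate ℝ (1 : ℝ) n) (fun n ↦ ?_) ?_)
  · rw [dist_comm, dist_eq_norm]
    exact norm_sqrtIterate_succ_sub_le 𝕜 hs n
  · refine summable_of_sum_range_le (c := 1) (fun n ↦ ?_) (fun n ↦ ?_)
    · exact (norm_nonneg (sqrtIterate 𝕜 s (n + 1) - sqrtIterate 𝕜 s n)).trans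
        (norm_sqrtIterate_succ_sub_le 𝕜 hs n)
    · rw [Finset.sum_range_sub, sqrtIterate, sub_zero]
      exact (sqrtIterate_one_mem_Icc n).2

variable {𝕜} in
theorem one_sub_mul_self_of_tendsto_sqrtIterate {s y : A}
    (hy : Tendsto (sqrtIterate 𝕜 s) atTop (𝓝 y)) : (1 - y) * (1 - y) = 1 - s := by
  have hfix : y = (2⁻¹ : 𝕜) • (s + y * y) :=
    tendsto_nhds_unique ((tendsto_add_atTop_iff_nat 1).2 hy)
      ((tendsto_const_nhds.add (hy.mul hy)).const_smul _)
  have hdouble : y + y = s + y * y := by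
    rw [← two_smul 𝕜 y]
    nth_rewrite 1 [hfix]
    rw [smul_inv_smul₀ two_ne_zero]
  rw [eq_sub_of_add_eq hdouble.symm]
  noncomm_ring

variable {𝕜} in
theorem norm_le_one_of_tendsto_sqrtIterate {s y : A} (hs : ‖s‖ ≤ 1)
    (hy : Tendsto (sqrtIterate 𝕜 s) atTop (𝓝 y)) : ‖y‖ ≤ 1 :=
  le_of_tendsto' hy.norm fun n ↦
    (norm_sqrtIterate_le 𝕜 hs n).trans (sqrtIterate_one_mem_Icc n).2

end SquareRoot

section SpectralCut

variable {𝕜 G K : Type*} [RCLike 𝕜] [NormedAddCommGroup G] [InnerProductSpace 𝕜 G] [CompleteSpace G]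
  [NormedAddCommGroup K] [InnerProductSpace 𝕜 K] [CompleteSpace K]

theorem isPositive_one_sub_of_norm_le_one {Y : G →L[𝕜] G} (hY : IsSelfAdjoint Y) (h : ‖Y‖ ≤ 1) :
    (1 - Y).IsPositive := by
  refine isPositive_def'.2 ⟨(IsSelfAdjoint.one _).sub hY, fun u ↦ ?_⟩
  have hYu : ‖Y u‖ ≤ ‖u‖ := by simpa using Y.le_of_opNorm_le h u
  have hre : RCLike.re ⟪Y u, u⟫_𝕜 ≤ ‖u‖ * ‖u‖ := (re_inner_le_norm (Y u) u).trans (by gcongr)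
  rw [reApplyInnerSelf_apply, sub_apply, inner_sub_left, map_sub, one_apply_eq_self,
    inner_self_eq_norm_mul_norm]
  linarith

theorem norm_one_sub_mul_self_le_one {D : G →L[𝕜] G} (hD : IsSelfAdjoint D) (h : ‖D‖ ≤ 1) :
    ‖1 - D * D‖ ≤ 1 := by
  refine opNorm_le_bound _ zero_le_one fun u ↦ ?_
  have hDD : ‖D (D u)‖ ≤ ‖D u‖ := by simpa using D.le_of_opNorm_le h (D u)
  have hinner : RCLike.re ⟪u, D (D u)⟫_𝕜 = ‖D u‖ ^ 2 := by
    rw [← inner_self_eq_norm_sq (𝕜 := 𝕜)]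
    exact congrArg RCLike.re (hD.isSymmetric u (D u)).symm
  have hexpand := norm_sub_sq (𝕜 := 𝕜) u (D (D u))
  rw [hinner] at hexpand
  rw [one_mul, sub_apply, one_apply_eq_self]
  change ‖u - D (D u)‖ ≤ ‖u‖
  refine le_of_sq_le_sq ?_ (norm_nonneg u)
  nlinarith [norm_nonneg (D (D u)), norm_nonneg (D u)]

theorem exists_isPositive_commute_mul_self_eq_of_norm_le_one {D : G →L[𝕜] G}
    (hD : IsSelfAdjoint D) (h : ‖D‖ ≤ 1) :
    ∃ R : G →L[𝕜] G, R.IsPositive ∧ Commute R D ∧ R * R = D * D := by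
  have hs := norm_one_sub_mul_self_le_one hD h
  have hs_comm : Commute (1 - D * D) D :=
    (Commute.one_left D).sub_left ((Commute.refl D).mul_left (Commute.refl D))
  have hs_selfAdjoint : IsSelfAdjoint (1 - D * D) :=
    (IsSelfAdjoint.one _).sub ((hD.commute_iff hD).1 rfl)
  obtain ⟨Y, hY⟩ := exists_tendsto_sqrtIterate 𝕜 hs
  have hY_selfAdjoint : IsSelfAdjoint Y :=
    tendsto_nhds_unique hY.star
      (hY.congr fun n ↦ (isSelfAdjoint_sqrtIterate 𝕜 hs_selfAdjoint n).symm)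
  have hY_comm : Commute Y D :=
    tendsto_nhds_unique (hY.mul_const D)
      ((hY.const_mul D).congr fun n ↦ (commute_sqrtIterate 𝕜 hs_comm n).symm)
  refine ⟨1 - Y, isPositive_one_sub_of_norm_le_one hY_selfAdjoint
    (norm_le_one_of_tendsto_sqrtIterate hs hY), (Commute.one_left D).sub_left hY_comm, ?_⟩
  rw [one_sub_mul_self_of_tendsto_sqrtIterate hY, sub_sub_cancel]

theorem exists_isPositive_commute_mul_self_eq {B : G →L[𝕜] G} (hB : IsSelfAdjoint B) :
    ∃ R : G →L[𝕜] G, R.IsPositive ∧ Commute R B ∧ R * R = B * B := by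
  obtain ⟨D, hD, hD_norm, hBD⟩ : ∃ D : G →L[𝕜] G,
      IsSelfAdjoint D ∧ ‖D‖ ≤ 1 ∧ (‖B‖ : 𝕜) • D = B :=
    ⟨(‖B‖ : 𝕜)⁻¹ • B, IsSelfAdjoint.smul (by simp [isSelfAdjoint_iff]) hB,
      norm_inv_norm_smul_le_one 𝕜 B, norm_smul_inv_norm_smul_self 𝕜 B⟩
  obtain ⟨R, hR, hRD, hRR⟩ := exists_isPositive_commute_mul_self_eq_of_norm_le_one hD hD_norm
  rw [← hBD]
  refine ⟨(‖B‖ : 𝕜) • R, hR.smul_of_nonneg (by simp), (hRD.smul_left _).smul_right _, ?_⟩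
  rw [smul_mul_smul_comm, hRR, smul_mul_smul_comm]

theorem exists_submodule_inner_nonpos_nonneg {B : G →L[𝕜] G} (hB : IsSelfAdjoint B) :
    ∃ L : Submodule 𝕜 G, IsClosed (L : Set G) ∧ (∀ v ∈ L, RCLike.re ⟪B v, v⟫_𝕜 ≤ 0) ∧
      ∀ h ∈ Lᗮ, 0 ≤ RCLike.re ⟪B h, h⟫_𝕜 := by
  obtain ⟨R, hR, hcomm, hsq⟩ := exists_isPositive_commute_mul_self_eq hB
  -- With `R = |B|`, this kernel is the spectral subspace of `B` for `(-∞, 0]`.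
  refine ⟨(R + B).ker, (R + B).isClosed_ker, fun v hv ↦ ?_, fun h hh ↦ ?_⟩
  · have hBv : B v = -R v := (neg_eq_of_add_eq_zero_right hv).symm
    rw [hBv, inner_neg_left, map_neg, neg_nonpos]
    exact hR.re_inner_nonneg_left v
  · have hzero : (R + B) * (R - B) = 0 := by rw [← hcomm.mul_self_sub_mul_self_eq, hsq, sub_self]
    have hmem (v : G) : (R - B) v ∈ (R + B).ker := DFunLike.congr_fun hzero v
    have hself : ⟪(R - B) h, (R - B) h⟫_𝕜 = 0 :=
      ((hR.isSelfAdjoint.sub hB).isSymmetric h _).trans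
        (Submodule.inner_left_of_mem_orthogonal (hmem _) hh)
    have hRB : R h = B h := sub_eq_zero.1 (inner_self_eq_zero.1 hself)
    rw [← hRB]
    exact hR.re_inner_nonneg_left h

theorem exists_submodule_le_norm_map_and_norm_map_sub_le (T : G →L[𝕜] K) {δ : ℝ} (hδ : 0 < δ) :
    ∃ H : Submodule 𝕜 G, (∀ h ∈ H, δ * ‖h‖ ≤ ‖T h‖) ∧ ∀ u, ∃ h ∈ H, ‖T (u - h)‖ ≤ δ * ‖u‖ := by
  have hre (v : G) : RCLike.re ⟪((adjoint T ∘L T) - ((δ ^ 2 : ℝ) : 𝕜) • (1 : G →L[𝕜] G)) v, v⟫_𝕜 =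
      ‖T v‖ ^ 2 - (δ * ‖v‖) ^ 2 := by
    rw [sub_apply, inner_sub_left, map_sub, ← apply_norm_sq_eq_inner_adjoint_left, smul_apply,
      one_apply_eq_self, inner_smul_left, RCLike.conj_ofReal, RCLike.re_ofReal_mul,
      inner_self_eq_norm_sq, mul_pow]
  have hB : IsSelfAdjoint ((adjoint T ∘L T) - ((δ ^ 2 : ℝ) : 𝕜) • (1 : G →L[𝕜] G)) :=
    (isPositive_adjoint_comp_self T).isSelfAdjoint.sub
      (IsSelfAdjoint.smul (by simp [isSelfAdjoint_iff]) (IsSelfAdjoint.one _))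
  obtain ⟨L, hL_closed, hL, hLperp⟩ := exists_submodule_inner_nonpos_nonneg hB
  have := hL_closed.completeSpace_coe
  refine ⟨Lᗮ, fun h hh ↦ ?_, fun u ↦
    ⟨u - L.starProjection u, L.sub_starProjection_mem_orthogonal u, ?_⟩⟩
  · exact le_of_sq_le_sq (by linarith [hLperp h hh, hre h]) (norm_nonneg _)
  · have hmem : L.starProjection u ∈ L := L.starProjection_apply_mem u
    have hcut : ‖T (L.starProjection u)‖ ≤ δ * ‖L.starProjection u‖ :=
      le_of_sq_le_sq (by linarith [hL _ hmem, hre (L.starProjection u)]) (by positivity)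
    rw [sub_sub_cancel]
    exact hcut.trans (by gcongr; exact L.norm_starProjection_apply_le u)

end SpectralCut

section CompactApproximation

variable {𝕜 Y K : Type*} [RCLike 𝕜] [NormedAddCommGroup Y] [NormedSpace 𝕜 Y]
  [NormedAddCommGroup K] [NormedSpace 𝕜 K]

theorem exists_finset_norm_map_sub_le {C : Y →L[𝕜] K} (hC : IsCompactOperator C) {η : ℝ}
    (hη : 0 < η) : ∃ t : Finset Y, ∀ y, ∃ x ∈ t, ‖C (y - (‖y‖ : 𝕜) • x)‖ ≤ η * ‖y‖ := by
  have htb : TotallyBounded (C '' Metric.closedBall 0 1) :=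
    (hC.isCompact_closure_image_closedBall 1).totallyBounded.subset subset_closure
  obtain ⟨t, -, ht, hcover⟩ := Set.exists_subset_image_finite_and.1
    (totallyBounded_iff_subset.1 htb _ (Metric.dist_mem_uniformity hη))
  refine ⟨ht.toFinset, fun y ↦ ?_⟩
  obtain ⟨x, hx, hdist⟩ : ∃ x ∈ t, dist (C ((‖y‖ : 𝕜)⁻¹ • y)) (C x) < η := by
    simpa using hcover (Set.mem_image_of_mem C
      (mem_closedBall_zero_iff.2 (norm_inv_norm_smul_le_one 𝕜 y)))
  refine ⟨x, ht.mem_toFinset.2 hx, ?_⟩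
  calc ‖C (y - (‖y‖ : 𝕜) • x)‖ = ‖C ((‖y‖ : 𝕜) • ((‖y‖ : 𝕜)⁻¹ • y - x))‖ := by
        rw [smul_sub, norm_smul_inv_norm_smul_self]
    _ = dist (C ((‖y‖ : 𝕜)⁻¹ • y)) (C x) * ‖y‖ := by
      rw [map_smul, norm_smul, map_sub, dist_eq_norm, RCLike.norm_ofReal, abs_norm, mul_comm]
    _ ≤ η * ‖y‖ := by gcongr

end CompactApproximation

section Factorization

variable {𝕜 Y G K : Type*} [RCLike 𝕜] [NormedAddCommGroup Y] [NormedSpace 𝕜 Y]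
  [NormedAddCommGroup G] [InnerProductSpace 𝕜 G] [CompleteSpace G]
  [NormedAddCommGroup K] [InnerProductSpace 𝕜 K] [CompleteSpace K]

theorem exists_submodule_of_approx_by_range (T : Y →L[𝕜] K) (R : G →L[𝕜] Y)
    {M ε : ℝ} (hM : 0 < M) (hε : 0 < ε)
    (hR : ∀ y, ∃ u, ‖u‖ ≤ M * ‖y‖ ∧ ‖T (y - R u)‖ ≤ ε / 2 * ‖y‖) :
    ∃ (Z : Submodule 𝕜 Y) (c : ℝ), 0 < c ∧ (∀ z ∈ Z, c * ‖z‖ ≤ ‖T z‖) ∧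
      ∀ y, ∃ z ∈ Z, ‖T (y - z)‖ ≤ ε * ‖y‖ := by
  set δ := ε / 2 / M
  have hδ : 0 < δ := by positivity
  obtain ⟨H, hH, hcut⟩ := exists_submodule_le_norm_map_and_norm_map_sub_le (T ∘L R) hδ
  refine ⟨H.map R.toLinearMap, δ / (‖R‖ + 1), by positivity, ?_, fun y ↦ ?_⟩
  · rintro _ ⟨h, hh, rfl⟩
    have hRh : ‖R h‖ ≤ (‖R‖ + 1) * ‖h‖ := R.le_of_opNorm_le (by linarith) h
    calc δ / (‖R‖ + 1) * ‖R h‖ ≤ δ / (‖R‖ + 1) * ((‖R‖ + 1) * ‖h‖) := by gcongr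
      _ = δ * ‖h‖ := by field_simp
      _ ≤ ‖T (R h)‖ := hH h hh
  · obtain ⟨u, hu, hTu⟩ := hR y
    obtain ⟨h, hh, hTh⟩ := hcut u
    refine ⟨R h, Submodule.mem_map_of_mem hh, ?_⟩
    calc ‖T (y - R h)‖ = ‖T (y - R u) + (T ∘L R) (u - h)‖ := by simp
      _ ≤ ε / 2 * ‖y‖ + δ * (M * ‖y‖) := norm_add_le_of_le hTu (hTh.trans (by gcongr))
      _ = ε * ‖y‖ := by simp only [δ]; field_simp; ring

open Classical in
theorem exists_submodule_of_isCompactOperator (T : Y →L[𝕜] K) (Q : G →L[𝕜] Y)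
    (B : Y →L[𝕜] G) (hC : IsCompactOperator (T ∘L (ContinuousLinearMap.id 𝕜 Y - Q ∘L B)))
    {ε : ℝ} (hε : 0 < ε) :
    ∃ (Z : Submodule 𝕜 Y) (c : ℝ), 0 < c ∧ (∀ z ∈ Z, c * ‖z‖ ≤ ‖T z‖) ∧
      ∀ y, ∃ z ∈ Z, ‖T (y - z)‖ ≤ ε * ‖y‖ := by
  set E := ContinuousLinearMap.id 𝕜 Y - Q ∘L B with hE
  obtain ⟨t, ht⟩ := exists_finset_norm_map_sub_le hC (half_pos hε)
  -- The compact error is absorbed by enlarging `G` by a finite-dimensional Hilbert space.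
  let F : EuclideanSpace 𝕜 t →L[𝕜] Y := ∑ x : t, (EuclideanSpace.proj x).smulRight (E x)
  have hF (x : t) (a : 𝕜) : F (EuclideanSpace.single x a) = a • E x := by
    simp [F, sum_apply]
  refine exists_submodule_of_approx_by_range (M := ‖B‖ + 1) T
    (Q ∘L WithLp.fstL 2 𝕜 G (EuclideanSpace 𝕜 t) + F ∘L WithLp.sndL 2 𝕜 G (EuclideanSpace 𝕜 t))
    (by positivity) hε fun y ↦ ?_
  obtain ⟨x, hx, hCx⟩ := ht y
  refine ⟨WithLp.toLp 2 (B y, EuclideanSpace.single ⟨x, hx⟩ (‖y‖ : 𝕜)), ?_, ?_⟩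
  · calc ‖WithLp.toLp 2 (B y, EuclideanSpace.single (⟨x, hx⟩ : t) (‖y‖ : 𝕜))‖
        = ‖WithLp.toLp 2 (B y, 0) +
            WithLp.toLp 2 (0, EuclideanSpace.single (⟨x, hx⟩ : t) (‖y‖ : 𝕜))‖ := by
          simp [← WithLp.toLp_add]
      _ ≤ ‖B‖ * ‖y‖ + ‖y‖ := norm_add_le_of_le (by simpa using B.le_opNorm y) (by simp)
      _ = (‖B‖ + 1) * ‖y‖ := by ring
  · convert hCx using 2
    simp [hF, hE, smul_sub]
    abel

end Factorization

section Pitt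

variable {ι 𝕜 : Type*} [RCLike 𝕜] {E : ι → Type*} [∀ i, NormedAddCommGroup (E i)] {q : ℝ≥0∞}

theorem lp_norm_add_rpow_of_disjoint (hq : 0 < q.toReal) {f g : lp E q}
    (h : ∀ i, f i = 0 ∨ g i = 0) :
    ‖f + g‖ ^ q.toReal = ‖f‖ ^ q.toReal + ‖g‖ ^ q.toReal := by
  rw [lp.norm_rpow_eq_tsum hq, lp.norm_rpow_eq_tsum hq, lp.norm_rpow_eq_tsum hq,
    ← ((lp.memℓp f).summable hq).tsum_add ((lp.memℓp g).summable hq)]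
  refine tsum_congr fun i ↦ ?_
  rcases h i with hi | hi <;> simp [hi, Real.zero_rpow hq.ne']

variable [∀ i, NormedSpace 𝕜 (E i)] [Fact (1 ≤ q)]

open Classical in
variable (𝕜 E q) in
/-- The projection of the `ℓ_q`-sum of the spaces `E i` onto the coordinates in `s`. -/
def lpTruncation (s : Finset ι) : lp E q →L[𝕜] lp E q :=
  ∑ i ∈ s, lp.singleContinuousLinearMap 𝕜 E q i ∘L lp.evalCLM 𝕜 E q i

open Classical in
theorem lpTruncation_apply (s : Finset ι) (f : lp E q) :
    lpTruncation 𝕜 E q s f = ∑ i ∈ s, lp.single q i (f i) := by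
  simp [lpTruncation, sum_apply, lp.evalCLM]

open Classical in
theorem lpTruncation_apply_apply (s : Finset ι) (f : lp E q) (i : ι) :
    lpTruncation 𝕜 E q s f i = if i ∈ s then f i else 0 := by
  simp only [lpTruncation_apply, lp.coeFn_sum, lp.coeFn_single, Finset.sum_apply,
    Finset.sum_pi_single]

theorem norm_lpTruncation_apply_le (s : Finset ι) (f : lp E q) :
    ‖lpTruncation 𝕜 E q s f‖ ≤ ‖f‖ :=
  lp.norm_mono (zero_lt_one.trans_le Fact.out).ne' fun i ↦ by
    rw [lpTruncation_apply_apply]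
    split_ifs <;> simp

theorem norm_sub_lpTruncation_apply_le (s : Finset ι) (f : lp E q) :
    ‖f - lpTruncation 𝕜 E q s f‖ ≤ ‖f‖ :=
  lp.norm_mono (zero_lt_one.trans_le Fact.out).ne' fun i ↦ by
    rw [lp.coeFn_sub, Pi.sub_apply, lpTruncation_apply_apply]
    split_ifs <;> simp

theorem tendsto_lpTruncation_apply (hq : q ≠ ⊤) (f : lp E q) :
    Tendsto (fun s ↦ lpTruncation 𝕜 E q s f) atTop (𝓝 f) := by
  classical
  simp only [lpTruncation_apply]
  exact lp.hasSum_single hq f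

theorem isCompactOperator_lpTruncation [∀ i, FiniteDimensional 𝕜 (E i)] (s : Finset ι) :
    IsCompactOperator (lpTruncation 𝕜 E q s) := by
  classical
  refine (compactOperator (RingHom.id 𝕜) (lp E q) (lp E q)).sum_mem fun i _ ↦ ?_
  have := FiniteDimensional.proper 𝕜 (E i)
  exact (isCompactOperator_of_locallyCompactSpace_dom
    (lp.evalCLM 𝕜 E q i)).clm_comp (lp.singleContinuousLinearMap 𝕜 E q i)

variable {K : Type*} [NormedAddCommGroup K] [InnerProductSpace 𝕜 K]

theorem norm_map_sq_add_norm_map_sq_le (hq : 0 < q.toReal) (S : lp E q →L[𝕜] K) {f g : lp E q}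
    (h : ∀ i, f i = 0 ∨ g i = 0) :
    ‖S f‖ ^ 2 + ‖S g‖ ^ 2 ≤ ‖S‖ ^ 2 * (‖f‖ ^ q.toReal + ‖g‖ ^ q.toReal) ^ (2 / q.toReal) := by
  have hpow {u : lp E q} (hu : ‖u‖ ^ q.toReal = ‖f‖ ^ q.toReal + ‖g‖ ^ q.toReal) :
      ‖S u‖ ^ 2 ≤ ‖S‖ ^ 2 * (‖f‖ ^ q.toReal + ‖g‖ ^ q.toReal) ^ (2 / q.toReal) := by
    rw [← hu, ← Real.rpow_mul (norm_nonneg u), mul_div_cancel₀ _ hq.ne', Real.rpow_two, ← mul_pow]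
    gcongr
    exact S.le_opNorm u
  have hadd := hpow (lp_norm_add_rpow_of_disjoint hq h)
  have hsub := hpow (u := f - g) (by
    rw [sub_eq_add_neg, lp_norm_add_rpow_of_disjoint hq (by simpa using h), norm_neg])
  rw [map_add] at hadd
  rw [map_sub] at hsub
  linarith [parallelogram_law_with_norm 𝕜 (S f) (S g)]

-- If `f` almost norms `S`, this forces `S g` to be small: take `t` small, as `t ^ q = o(t ^ 2)`.
theorem mul_norm_map_sq_le_of_disjoint (hq : 2 ≤ q.toReal) (S : lp E q →L[𝕜] K) {f g : lp E q}
    (h : ∀ i, f i = 0 ∨ g i = 0) (hf : ‖f‖ ≤ 1) (hg : ‖g‖ ≤ 1) {t : ℝ} (ht : 0 ≤ t) :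
    t ^ 2 * ‖S g‖ ^ 2 ≤ ‖S‖ ^ 2 - ‖S f‖ ^ 2 + ‖S‖ ^ 2 * t ^ q.toReal := by
  have hq_pos : 0 < q.toReal := by linarith
  have hdisj (i : ι) : f i = 0 ∨ ((t : 𝕜) • g) i = 0 := (h i).imp_right fun hi ↦ by simp [hi]
  have htg : ‖(t : 𝕜) • g‖ ≤ t := by
    rw [norm_smul, RCLike.norm_of_nonneg ht]
    exact mul_le_of_le_one_right ht hg
  have hsum : ‖S f‖ ^ 2 + t ^ 2 * ‖S g‖ ^ 2 ≤ ‖S‖ ^ 2 * (1 + t ^ q.toReal) :=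
    calc ‖S f‖ ^ 2 + t ^ 2 * ‖S g‖ ^ 2 = ‖S f‖ ^ 2 + ‖S ((t : 𝕜) • g)‖ ^ 2 := by
          rw [map_smul, norm_smul, RCLike.norm_of_nonneg ht, mul_pow]
      _ ≤ ‖S‖ ^ 2 * (‖f‖ ^ q.toReal + ‖(t : 𝕜) • g‖ ^ q.toReal) ^ (2 / q.toReal) :=
          norm_map_sq_add_norm_map_sq_le hq_pos S hdisj
      _ ≤ ‖S‖ ^ 2 * (1 + t ^ q.toReal) ^ (2 / q.toReal) := by
          gcongr
          exact Real.rpow_le_one (norm_nonneg f) hf hq_pos.le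
      _ ≤ ‖S‖ ^ 2 * (1 + t ^ q.toReal) := by
          gcongr
          exact Real.rpow_le_self_of_one_le (le_add_of_nonneg_right (Real.rpow_nonneg ht _))
            ((div_le_one hq_pos).2 hq)
  linarith

theorem exists_finset_norm_le_one_opNorm_sq_sub_lt (hq : q ≠ ⊤) (S : lp E q →L[𝕜] K) {δ : ℝ}
    (hδ : 0 < δ) : ∃ (s : Finset ι) (f : lp E q),
      (∀ i ∉ s, f i = 0) ∧ ‖f‖ ≤ 1 ∧ ‖S‖ ^ 2 - δ < ‖S f‖ ^ 2 := by
  obtain ⟨f, hf, hSf⟩ :=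
    S.exists_lt_apply_of_lt_opNorm (sub_lt_self ‖S‖ (show 0 < δ / (2 * ‖S‖ + 1) by positivity))
  have hlim : Tendsto (fun s ↦ ‖S (lpTruncation 𝕜 E q s f)‖) atTop (𝓝 ‖S f‖) :=
    ((S.continuous.tendsto f).comp (tendsto_lpTruncation_apply hq f)).norm
  obtain ⟨s, hs⟩ := (hlim.eventually_const_lt hSf).exists
  have hnorm := (norm_lpTruncation_apply_le (𝕜 := 𝕜) s f).trans hf.le
  refine ⟨s, lpTruncation 𝕜 E q s f, fun i hi ↦ by simp [lpTruncation_apply_apply, hi], hnorm, ?_⟩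
  have hle : ‖S (lpTruncation 𝕜 E q s f)‖ ≤ ‖S‖ := S.unit_le_opNorm _ hnorm
  have hδ' : δ / (2 * ‖S‖ + 1) * (2 * ‖S‖ + 1) = δ := by field_simp
  nlinarith [norm_nonneg (S (lpTruncation 𝕜 E q s f))]

theorem exists_finset_norm_map_le (hq : 2 < q) (hq' : q ≠ ⊤) (S : lp E q →L[𝕜] K) {η : ℝ}
    (hη : 0 < η) : ∃ s : Finset ι, ∀ g : lp E q, (∀ i ∈ s, g i = 0) → ‖S g‖ ≤ η * ‖g‖ := by
  have hr : 2 < q.toReal := by simpa using (ENNReal.toReal_lt_toReal (by simp) hq').2 hq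
  have hlim : Tendsto (fun t : ℝ ↦ ‖S‖ ^ 2 * t ^ (q.toReal - 2)) (𝓝[>] 0) (𝓝 0) := by
    have hcont := ((Real.continuous_rpow_const (sub_pos.2 hr).le).tendsto 0).const_mul (‖S‖ ^ 2)
    rw [Real.zero_rpow (sub_pos.2 hr).ne', mul_zero] at hcont
    exact hcont.mono_left nhdsWithin_le_nhds
  obtain ⟨t, htη, ht : 0 < t⟩ := ((hlim.eventually_lt_const
    (show 0 < η ^ 2 / 2 by positivity)).and self_mem_nhdsWithin).exists
  obtain ⟨s, f, hfs, hf, hSf⟩ :=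
    exists_finset_norm_le_one_opNorm_sq_sub_lt hq' S (show 0 < t ^ 2 * (η ^ 2 / 2) by positivity)
  refine ⟨s, fun g hg ↦ ?_⟩
  have hdisj (i : ι) : f i = 0 ∨ ((‖g‖ : 𝕜)⁻¹ • g) i = 0 := by
    by_cases hi : i ∈ s
    · exact .inr (by simp [hg i hi])
    · exact .inl (hfs i hi)
  have hSg : ‖S ((‖g‖ : 𝕜)⁻¹ • g)‖ ≤ η := by
    have hmul := mul_norm_map_sq_le_of_disjoint hr.le S hdisj hf (norm_inv_norm_smul_le_one 𝕜 g)
      ht.le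
    have hpow : t ^ q.toReal = t ^ 2 * t ^ (q.toReal - 2) := by
      rw [← Real.rpow_two, ← Real.rpow_add ht, add_sub_cancel]
    rw [hpow] at hmul
    refine le_of_sq_le_sq (le_of_mul_le_mul_left ?_ (sq_pos_of_pos ht)) hη.le
    nlinarith
  calc ‖S g‖ = ‖S ((‖g‖ : 𝕜) • (‖g‖ : 𝕜)⁻¹ • g)‖ := by rw [norm_smul_inv_norm_smul_self]
    _ = ‖S ((‖g‖ : 𝕜)⁻¹ • g)‖ * ‖g‖ := by
      rw [map_smul, norm_smul, RCLike.norm_ofReal, abs_norm, mul_comm]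
    _ ≤ η * ‖g‖ := by gcongr

/-- Pitt's theorem for operators into a Hilbert space. -/
theorem isCompactOperator_lp_of_two_lt [CompleteSpace K] [∀ i, FiniteDimensional 𝕜 (E i)]
    (hq : 2 < q) (hq' : q ≠ ⊤) (S : lp E q →L[𝕜] K) : IsCompactOperator S := by
  have hclosed : IsClosed {T : lp E q →L[𝕜] K | IsCompactOperator T} :=
    isClosed_setOfPred_isCompactOperator
  refine hclosed.closure_subset (Metric.mem_closure_iff.2 fun ε hε ↦ ?_)
  obtain ⟨s, hs⟩ := exists_finset_norm_map_le hq hq' S (half_pos hε)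
  refine ⟨S ∘L lpTruncation 𝕜 E q s, (isCompactOperator_lpTruncation s).clm_comp S, ?_⟩
  rw [dist_eq_norm]
  refine (opNorm_le_bound _ (half_pos hε).le fun f ↦ ?_).trans_lt (half_lt_self hε)
  have htail (i : ι) (hi : i ∈ s) : (f - lpTruncation 𝕜 E q s f) i = 0 := by
    simp [lpTruncation_apply_apply, hi]
  calc ‖(S - S ∘L lpTruncation 𝕜 E q s) f‖ = ‖S (f - lpTruncation 𝕜 E q s f)‖ := by simp
    _ ≤ ε / 2 * ‖f - lpTruncation 𝕜 E q s f‖ := hs _ htail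
    _ ≤ ε / 2 * ‖f‖ := by gcongr; exact norm_sub_lpTruncation_apply_le s f

theorem exists_submodule_of_leftInverse_lp_prod {Y G : Type*} [NormedAddCommGroup Y]
    [NormedSpace 𝕜 Y] [NormedAddCommGroup G] [InnerProductSpace 𝕜 G] [CompleteSpace G]
    [CompleteSpace K] [∀ i, FiniteDimensional 𝕜 (E i)] (hq : 2 < q) (hq' : q ≠ ⊤)
    {J : Y →L[𝕜] lp E q × G} {Q : lp E q × G →L[𝕜] Y} (hQJ : Function.LeftInverse Q J)
    (T : Y →L[𝕜] K) {ε : ℝ} (hε : 0 < ε) :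
    ∃ (Z : Submodule 𝕜 Y) (c : ℝ), 0 < c ∧ (∀ z ∈ Z, c * ‖z‖ ≤ ‖T z‖) ∧
      ∀ y, ∃ z ∈ Z, ‖T (y - z)‖ ≤ ε * ‖y‖ := by
  have hfactor : .id 𝕜 Y - (Q ∘L inr 𝕜 (lp E q) G) ∘L (snd 𝕜 (lp E q) G ∘L J) =
      Q ∘L inl 𝕜 (lp E q) G ∘L (fst 𝕜 (lp E q) G ∘L J) := by
    ext1 y
    have hsplit : Q ((J y).1, 0) + Q (0, (J y).2) = y := by simp [← map_add, hQJ y]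
    exact (eq_sub_of_add_eq hsplit).symm
  refine exists_submodule_of_isCompactOperator T (Q ∘L inr 𝕜 (lp E q) G)
    (snd 𝕜 (lp E q) G ∘L J) ?_ hε
  rw [hfactor]
  exact (isCompactOperator_lp_of_two_lt hq hq' (T ∘L Q ∘L inl 𝕜 (lp E q) G)).comp_clm _

end Pitt

section WeightedRatio

variable [Fact (1 ≤ ENNReal.ofReal p)]

variable (p w) in
/-- The map `X_{p,w} → ℓ_2`, `a ↦ w·a`, whose norm function is `|a|_2`. -/
def toWeightedL2 : Xpw p w →L[ℝ] Seq2 :=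
  (snd ℝ (SeqP p) Seq2).comp (XpwMod p w).subtypeL

theorem nrm2_eq_norm_toWeightedL2 (x : Xpw p w) : nrm2 x = ‖toWeightedL2 p w x‖ := rfl

theorem norm_eq_max_nrmP_nrm2 (x : Xpw p w) : ‖x‖ = max (nrmP x) (nrm2 x) := rfl

theorem nrmP_pos {x : Xpw p w} (hx : x ≠ 0) : 0 < nrmP x := by
  refine norm_pos_iff.2 fun hfst ↦ hx (Subtype.ext (Prod.ext hfst (lp.ext (funext fun n ↦ ?_))))
  have hcoord : (Xpw.pair x).2 n = w n * (Xpw.pair x).1 n := x.2 n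
  rw [hfst, lp.coeFn_zero, Pi.zero_apply, mul_zero] at hcoord
  exact hcoord

theorem le_ratio_of_mul_norm_le_nrm2 {x : Xpw p w} (hx : x ≠ 0) {c : ℝ} (hc : 0 ≤ c)
    (h : c * ‖x‖ ≤ nrm2 x) : c ≤ ratio x := by
  rw [ratio, le_div_iff₀ (nrmP_pos hx)]
  refine le_trans ?_ h
  gcongr
  exact le_max_left _ _

theorem norm_lt_mul_nrm2_of_lt_ratio {x : Xpw p w} {β : ℝ} (hβ : 0 < β) (h : β < ratio x) :
    ‖x‖ < (1 + β⁻¹) * nrm2 x := by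
  have hx : x ≠ 0 := by
    rintro rfl
    have hzero : ratio (0 : Xpw p w) = 0 := by
      rw [ratio, nrm2_eq_norm_toWeightedL2, map_zero, norm_zero, zero_div]
    linarith
  have hlt : nrmP x < β⁻¹ * nrm2 x := (lt_inv_mul_iff₀ hβ).2 ((lt_div_iff₀ (nrmP_pos hx)).1 h)
  have hpos : 0 < nrm2 x := pos_of_mul_pos_right ((nrmP_pos hx).trans hlt) (inv_pos.2 hβ).le
  rw [norm_eq_max_nrmP_nrm2, add_mul, one_mul]
  exact max_lt (by linarith) (by linarith [nrmP_pos hx])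

end WeightedRatio

theorem stmt14_general (hp : 2 < p) [Fact (1 ≤ ENNReal.ofReal p)] (X : Submodule ℝ (Xpw p w))
    (V : Submodule ℝ (SeqP p × Seq2)) (hV : V.ClosedComplemented)
    (hiso : Nonempty (↥X ≃L[ℝ] ↥V)) {ε β : ℝ} (hε : 0 < ε) (hβ : 0 < β) :
    ∃ Z : Submodule ℝ (Xpw p w), Z ≤ X ∧ ∃ β' : ℝ, 0 < β' ∧
      (∀ z ∈ Z, z ≠ 0 → ratio z ≥ β') ∧
      (∀ x ∈ X, ratio x > β → ∃ z ∈ Z, nrm2 (x - z) < ε * nrm2 x) := by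
  obtain ⟨e⟩ := hiso
  obtain ⟨π, hπ⟩ := hV
  have hleft : Function.LeftInverse ((e.symm : V →L[ℝ] X) ∘L π) (V.subtypeL ∘L (e : X →L[ℝ] V)) :=
    fun x ↦ by simp [hπ]
  obtain ⟨Z, c, hc, hZ, happrox⟩ := exists_submodule_of_leftInverse_lp_prod (by simpa using hp)
    ENNReal.ofReal_ne_top hleft (toWeightedL2 p w ∘L X.subtypeL)
    (show 0 < ε / (1 + β⁻¹) by positivity)
  refine ⟨Z.map X.subtype, Submodule.map_subtype_le X Z, c, hc, ?_, fun x hx hxβ ↦ ?_⟩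
  · rintro _ ⟨z, hz, rfl⟩ hz0
    exact le_ratio_of_mul_norm_le_nrm2 hz0 hc.le (hZ z hz)
  · obtain ⟨z, hz, hxz⟩ := happrox ⟨x, hx⟩
    refine ⟨X.subtype z, Submodule.mem_map_of_mem hz, ?_⟩
    calc nrm2 (x - X.subtype z) ≤ ε / (1 + β⁻¹) * ‖x‖ := hxz
      _ < ε / (1 + β⁻¹) * ((1 + β⁻¹) * nrm2 x) := by
        gcongr
        exact norm_lt_mul_nrm2_of_lt_ratio hβ hxβ
      _ = ε * nrm2 x := by field_simp

/-- Proposition 2.4, converse: if a complemented subspace `X` of `X_p`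
is isomorphic to a complemented subspace of `ℓ_p ⊕ ℓ_2`, then there exist a subspace
`Z` of `X` and constants `ε, β, β' > 0` with `ε ≤ 1` such that (a) `r(z) ≥ β'` for all
nonzero `z ∈ Z` and (b) every `x ∈ X` with `r(x) > β` admits `z ∈ Z` with
`|x - z|_2 < ε |x|_2`. -/
theorem stmt14 (p : ℝ) (hp : 2 < p) [Fact (1 ≤ ENNReal.ofReal p)]
    (w : ℕ → ℝ) (hw : IsXpWeight p w)
    (X : Submodule ℝ (Xpw p w)) (hX : X.ClosedComplemented)
    (V : Submodule ℝ (SeqP p × Seq2)) (hV : V.ClosedComplemented)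
    (hiso : Nonempty (↥X ≃L[ℝ] ↥V)) :
    ∃ Z : Submodule ℝ (Xpw p w), Z ≤ X ∧
      ∃ ε β β' : ℝ, 0 < ε ∧ ε ≤ 1 ∧ 0 < β ∧ 0 < β' ∧
        (∀ z ∈ Z, z ≠ 0 → ratio z ≥ β') ∧
        (∀ x ∈ X, ratio x > β → ∃ z ∈ Z, nrm2 (x - z) < ε * nrm2 x) := by
  obtain ⟨Z, hZX, β', hβ', hZ⟩ := stmt14_general hp X V hV hiso one_pos one_pos
  exact ⟨Z, hZX, 1, 1, β', one_pos, le_rfl, one_pos, hβ', hZ⟩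
end
end
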